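/- Let V = ℂ⁶ with basis e₁, …, e₆, let w = e₁∧e₆ + e₂∧e₅ + e₃∧e₄ ∈ ⋀²V, and let W ⊆ ⋀³V be the kernel of the linear map ⋀³V → ⋀⁵V given by α ↦ w ∧ α. Let X be the endomorphism of V with X e₁ = 0, X e₂ = e₁, X e₃ = e₂, X e₄ = e₃, X e₅ = −e₄, X e₆ = −e₅, and let D_X be the derivation extension of X to ⋀³V. Then W has dimension 14, D_X(W) ⊆ W, and the restriction Z of D_X to W is nilpotent with Jordan type (10, 4), i.e. dim ker(Z^p) = min(p,10) + min(p,4) for all p ≥ 0. -/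

import Mathlib

set_option synthInstance.maxHeartbeats 4000000
set_option maxHeartbeats 1000000
set_option maxSynthPendingDepth 3

/-!
An endomorphism `X` of `M` extends to a derivation `δ` of the whole exterior algebra, namely the
`ε`-component of the homomorphism `⋀M → (⋀M)[ε]` determined by `v ↦ v + ε X v`, and `D_X` is the
restriction of `δ` to `⋀³M`. As `δ w = 0`, the map `w ∧ ·` commutes with `δ`, so `W` is invariant.
The six standard pentavectors are, up to sign, a single `δ`-chain headed by `w ∧ e₃ ∧ e₄ ∧ e₆`;
hence `w ∧ · : ⋀³V → ⋀⁵V` is onto and `dim W = 20 - 6 = 14`. Two explicit `δ`-chains in `W`, of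
lengths 10 and 4, are independent because their last vectors are, so they form a Jordan basis of
`W`. The primes `2`, `3` and `7` have to be invertible because
`δ⁹ (e₄ ∧ e₅ ∧ e₆) = -42 e₁ ∧ e₂ ∧ e₃`.
-/

section JordanChains

open Module

theorem pow_apply_of_forall_apply_castSucc {R M : Type*} [Semiring R] [AddCommMonoid M]
    [Module R M] {n : ℕ} {f : End R M} {v : Fin (n + 1) → M}
    (hv : ∀ i : Fin n, f (v i.castSucc) = v i.succ) (i : Fin (n + 1)) :
    (f ^ (i : ℕ)) (v 0) = v i := by
  induction i using Fin.induction with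
  | zero => rfl
  | succ i ih => rw [Fin.val_succ, pow_succ', End.mul_apply, ← hv, ← ih, Fin.val_castSucc]

/-- The Jordan chains `x j, f (x j), …, f ^ (s j - 1) (x j)` of the endomorphism `f`, as a single
family indexed by pairs `⟨j, i⟩` with `i < s j`. -/
def jordanChains {κ R M : Type*} [Semiring R] [AddCommMonoid M] [Module R M]
    (f : End R M) (x : κ → M) (s : κ → ℕ) (a : Σ j, Fin (s j)) : M :=
  (f ^ (a.2 : ℕ)) (x a.1)

theorem linearIndependent_jordanChains {κ R M : Type*} [Ring R] [AddCommGroup M] [Module R M]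
    {f : End R M} {x : κ → M} {s : κ → ℕ} (hzero : ∀ j, (f ^ s j) (x j) = 0)
    (hlast : LinearIndependent R fun j => (f ^ (s j - 1)) (x j)) :
    LinearIndependent R (jordanChains f x s) := by
  -- If `h` is the largest distance from the end of its chain of a vector in a given relation, then
  -- applying `f ^ h` to that relation leaves a relation between last vectors only.
  let height (a : Σ j, Fin (s j)) : ℕ := s a.1 - 1 - a.2
  let last (a : Σ j, Fin (s j)) : M := (f ^ (s a.1 - 1)) (x a.1)
  rw [linearIndependent_iff]
  intro l hl
  by_contra hne
  obtain ⟨a₀, ha₀, hmax⟩ :=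
    l.support.exists_max_image height (Finsupp.support_nonempty_iff.2 hne)
  have hpow : ∀ a ∈ l.support,
      (f ^ height a₀) (jordanChains f x s a) = if height a = height a₀ then last a else 0 := by
    intro a ha
    have hle : s a.1 - 1 - a.2 ≤ height a₀ := hmax a ha
    rw [jordanChains, ← End.mul_apply, ← pow_add]
    split_ifs with h
    · rw [← h, Nat.sub_add_cancel (by lia)]
    · exact End.pow_map_zero_of_le (by lia) (hzero a.1)
  have hsum : ∑ a ∈ l.support with height a = height a₀, l a • last a = 0 :=
    calc ∑ a ∈ l.support with height a = height a₀, l a • last a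
      _ = ∑ a ∈ l.support, l a • (f ^ height a₀) (jordanChains f x s a) := by
        rw [Finset.sum_filter]
        refine Finset.sum_congr rfl fun a ha => ?_
        rw [hpow a ha, smul_ite, smul_zero]
      _ = (f ^ height a₀) (Finsupp.linearCombination R (jordanChains f x s) l) := by
        simp only [Finsupp.linearCombination_apply, Finsupp.sum, map_sum, map_smul]
      _ = 0 := by rw [hl, map_zero]
  have hinj : Set.InjOn Sigma.fst
      (l.support.filter (height · = height a₀) : Set (Σ j, Fin (s j))) := by
    rintro ⟨j, i⟩ ha ⟨j', i'⟩ ha' (rfl : j = j')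
    have hi : s j - 1 - i = height a₀ := (Finset.mem_filter.1 ha).2
    have hi' : s j - 1 - i' = height a₀ := (Finset.mem_filter.1 ha').2
    obtain rfl : i = i' := by lia
    rfl
  have hindep : LinearIndepOn R last (l.support.filter (height · = height a₀)) :=
    hlast.comp _ hinj.injective
  exact Finsupp.mem_support_iff.1 ha₀
    (linearIndepOn_finset_iff.1 hindep l hsum a₀ (Finset.mem_filter.2 ⟨ha₀, rfl⟩))

variable {κ K V : Type*} [DivisionRing K] [AddCommGroup V] [Module K V]

theorem card_le_finrank_of_forall_mem [Fintype κ] {v : κ → V} (hv : LinearIndependent K v)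
    {W : Submodule K V} [FiniteDimensional K W] (hW : ∀ i, v i ∈ W) :
    Fintype.card κ ≤ finrank K W :=
  (LinearIndependent.of_comp (v := fun i => (⟨v i, hW i⟩ : W)) W.subtype
    hv).fintype_card_le_finrank

variable [Fintype κ] [FiniteDimensional K V] {f : End K V} {x : κ → V} {s : κ → ℕ}

theorem sum_min_le_finrank_ker_pow (hzero : ∀ j, (f ^ s j) (x j) = 0)
    (hindep : LinearIndependent K (jordanChains f x s)) (p : ℕ) :
    ∑ j, min p (s j) ≤ finrank K (LinearMap.ker (f ^ p)) := by
  let tail : (Σ j, Fin (min p (s j))) → Σ j, Fin (s j) :=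
    Sigma.map id fun j i => (⟨s j - min p (s j) + i, by lia⟩ : Fin (s j))
  have htail : Function.Injective tail :=
    Function.injective_id.sigma_map fun j i i' h => by simpa [Fin.ext_iff] using h
  simpa using card_le_finrank_of_forall_mem (hindep.comp tail htail)
    (W := LinearMap.ker (f ^ p)) fun ⟨j, i⟩ => by
      simp only [Function.comp_apply, tail, Sigma.map, jordanChains, LinearMap.mem_ker,
        id_eq, ← End.mul_apply, ← pow_add]
      exact End.pow_map_zero_of_le (by lia) (hzero j)

theorem sum_sub_le_finrank_range_pow (hindep : LinearIndependent K (jordanChains f x s)) (p : ℕ) :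
    ∑ j, (s j - p) ≤ finrank K (LinearMap.range (f ^ p)) := by
  let shift : (Σ j, Fin (s j - p)) → Σ j, Fin (s j) :=
    Sigma.map id fun j i => (⟨p + i, by lia⟩ : Fin (s j))
  have hshift : Function.Injective shift :=
    Function.injective_id.sigma_map fun j i i' h => by simpa [Fin.ext_iff] using h
  simpa using card_le_finrank_of_forall_mem (hindep.comp shift hshift)
    (W := LinearMap.range (f ^ p)) fun ⟨j, i⟩ => ⟨(f ^ (i : ℕ)) (x j), by
      rw [← End.mul_apply, ← pow_add]; rfl⟩

theorem finrank_ker_pow_eq_sum_min (hzero : ∀ j, (f ^ s j) (x j) = 0)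
    (hindep : LinearIndependent K (jordanChains f x s)) (hdim : finrank K V = ∑ j, s j) (p : ℕ) :
    finrank K (LinearMap.ker (f ^ p)) = ∑ j, min p (s j) := by
  have hker := sum_min_le_finrank_ker_pow hzero hindep p
  have hrange := sum_sub_le_finrank_range_pow hindep p
  have hrank := LinearMap.finrank_range_add_finrank_ker (f ^ p)
  have hsplit : ∑ j, min p (s j) + ∑ j, (s j - p) = ∑ j, s j := by
    rw [← Finset.sum_add_distrib]
    exact Finset.sum_congr rfl fun j _ => by lia
  lia

theorem isNilpotent_of_jordanChains (hzero : ∀ j, (f ^ s j) (x j) = 0)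
    (hindep : LinearIndependent K (jordanChains f x s)) (hdim : finrank K V = ∑ j, s j) :
    IsNilpotent f := by
  refine ⟨∑ j, s j, LinearMap.ker_eq_top.1 (Submodule.eq_top_of_finrank_eq ?_)⟩
  rw [finrank_ker_pow_eq_sum_min hzero hindep hdim, hdim]
  exact Finset.sum_congr rfl fun j hj =>
    min_eq_right (Finset.single_le_sum (fun i _ => Nat.zero_le (s i)) hj)

end JordanChains

section ExteriorDerivation

open Module ExteriorAlgebra

variable {R M : Type*} [CommRing R] [AddCommGroup M] [Module R M]

/-- The algebra homomorphism `⋀M → (⋀M)[ε]` with `v ↦ v + ε X v`; its `ε`-component is the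
derivation of `⋀M` extending `X`. -/
noncomputable def infinitesimalMap (X : End R M) :
    ExteriorAlgebra R M →ₐ[R] DualNumber (ExteriorAlgebra R M) :=
  lift R ⟨(TrivSqZeroExt.inlAlgHom R _ _).toLinearMap ∘ₗ ι R +
    (TrivSqZeroExt.inrHom _ _).restrictScalars R ∘ₗ ι R ∘ₗ X, fun v => by
      ext <;> simp [ι_add_mul_swap]⟩

theorem infinitesimalMap_ι (X : End R M) (v : M) :
    infinitesimalMap X (ι R v) = .inl (ι R v) + .inr (ι R (X v)) := by
  simp [infinitesimalMap]

theorem fst_infinitesimalMap (X : End R M) (a : ExteriorAlgebra R M) :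
    (infinitesimalMap X a).fst = a := by
  have h : (TrivSqZeroExt.fstHom R _ _).comp (infinitesimalMap X) = AlgHom.id R _ := by
    ext v
    simp [infinitesimalMap_ι]
  exact DFunLike.congr_fun h a

/-- The derivation of the exterior algebra extending the endomorphism `X` of `M`. -/
noncomputable def exteriorDerivation (X : End R M) : End R (ExteriorAlgebra R M) :=
  (TrivSqZeroExt.sndHom _ _).restrictScalars R ∘ₗ (infinitesimalMap X).toLinearMap

theorem exteriorDerivation_ι (X : End R M) (v : M) :
    exteriorDerivation X (ι R v) = ι R (X v) := by
  simp [exteriorDerivation, infinitesimalMap_ι]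

theorem exteriorDerivation_mul (X : End R M) (a b : ExteriorAlgebra R M) :
    exteriorDerivation X (a * b) = exteriorDerivation X a * b + a * exteriorDerivation X b := by
  simp [exteriorDerivation, fst_infinitesimalMap, add_comm]

theorem exteriorDerivation_mul_of_eq_zero {X : End R M} {a : ExteriorAlgebra R M}
    (ha : exteriorDerivation X a = 0) (b : ExteriorAlgebra R M) :
    exteriorDerivation X (a * b) = a * exteriorDerivation X b := by
  rw [exteriorDerivation_mul, ha, zero_mul, zero_add]

theorem exteriorDerivation_one (X : End R M) :
    exteriorDerivation X (1 : ExteriorAlgebra R M) = 0 := by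
  simp [exteriorDerivation]

theorem exteriorDerivation_ιMulti (X : End R M) {n : ℕ} (v : Fin n → M) :
    exteriorDerivation X (ιMulti R n v) =
      ∑ i, ιMulti R n (Function.update v i (X (v i))) := by
  induction n with
  | zero => simp [exteriorDerivation_one]
  | succ n ih =>
    have htail_zero : Matrix.vecTail (Function.update v 0 (X (v 0))) = Matrix.vecTail v := by
      ext i
      simp [Matrix.vecTail]
    have htail_succ (i : Fin n) : Matrix.vecTail (Function.update v i.succ (X (v i.succ))) =
        Function.update (Matrix.vecTail v) i (X (Matrix.vecTail v i)) :=
      Fin.tail_update_succ v i _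
    rw [ιMulti_succ_apply, exteriorDerivation_mul, exteriorDerivation_ι, ih, Fin.sum_univ_succ,
      Finset.mul_sum]
    simp only [ιMulti_succ_apply, htail_zero, htail_succ, Function.update_self,
      Function.update_of_ne (Fin.succ_ne_zero _).symm]

theorem exteriorDerivation_mem_exteriorPower (X : End R M) {n : ℕ} {a : ExteriorAlgebra R M}
    (ha : a ∈ ⋀[R]^n M) : exteriorDerivation X a ∈ ⋀[R]^n M := by
  rw [← ιMulti_span_fixedDegree] at ha
  induction ha using Submodule.span_induction with
  | mem a ha =>
    obtain ⟨v, rfl⟩ := ha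
    rw [exteriorDerivation_ιMulti]
    exact sum_mem fun i _ => ιMulti_range R n ⟨_, rfl⟩
  | zero => rw [map_zero]; exact zero_mem _
  | add a a' _ _ ha ha' => rw [map_add]; exact add_mem ha ha'
  | smul c a _ ha => rw [map_smul]; exact Submodule.smul_mem _ c ha

theorem coe_eq_exteriorDerivation (X : End R M) {n : ℕ} {D : End R (⋀[R]^n M)}
    (hD : ∀ v : Fin n → M,
      (D (exteriorPower.ιMulti R n v) : ExteriorAlgebra R M) =
        ∑ i, ιMulti R n (Function.update v i (X (v i))))
    (α : ⋀[R]^n M) : (D α : ExteriorAlgebra R M) = exteriorDerivation X α := by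
  have h : (⋀[R]^n M).subtype ∘ₗ D = exteriorDerivation X ∘ₗ (⋀[R]^n M).subtype := by
    refine exteriorPower.linearMap_ext ?_
    ext v
    exact (hD v).trans (exteriorDerivation_ιMulti X v).symm
  exact LinearMap.congr_fun h α

theorem ιMulti_basis_ne_zero [Nontrivial R] {n : ℕ} (b : Basis (Fin n) R M) :
    ιMulti R n b ≠ 0 := by
  intro h
  have hdet := exteriorPower.alternatingMapLinearEquiv_apply_ιMulti b.det b
  rw [show exteriorPower.ιMulti R n b = 0 from Subtype.ext h, map_zero, b.det_self] at hdet
  exact zero_ne_one hdet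

end ExteriorDerivation

section Wedge

open Module ExteriorAlgebra

variable {κ R M : Type*} [CommRing R] [AddCommGroup M] [Module R M]

/-- The monomial `e i₁ ∧ ⋯ ∧ e iₙ` in the exterior algebra, for the list `l = [i₁, …, iₙ]`. -/
def wedge (e : κ → M) (l : List κ) : ExteriorAlgebra R M :=
  (l.map fun i => ι R (e i)).prod

theorem ι_mul_wedge (e : κ → M) (i : κ) (l : List κ) :
    ι R (e i) * wedge e l = wedge e (i :: l) := by
  simp only [wedge, List.map_cons, List.prod_cons]

theorem wedge_mul_wedge (e : κ → M) (l l' : List κ) :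
    wedge e l * wedge e l' = (wedge e (l ++ l') : ExteriorAlgebra R M) := by
  simp only [wedge, List.map_append, List.prod_append]

theorem wedge_eq_ιMulti (e : κ → M) (l : List κ) :
    wedge e l = ιMulti R l.length fun i => e (l.get i) := by
  rw [ιMulti_apply, wedge, List.ofFn_comp' l.get fun i => ι R (e i), List.ofFn_get]

theorem wedge_eq_zero_of_not_nodup (e : κ → M) {l : List κ} (hl : ¬ l.Nodup) :
    wedge e l = (0 : ExteriorAlgebra R M) := by
  rw [wedge_eq_ιMulti]
  exact (ιMulti R l.length).map_eq_zero_of_not_injective _ fun h =>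
    hl (List.nodup_iff_injective_get.2 (h.of_comp (f := e)))

theorem wedge_mem_exteriorPower (e : κ → M) (l : List κ) : wedge e l ∈ ⋀[R]^l.length M := by
  rw [wedge_eq_ιMulti]
  exact ιMulti_range R l.length ⟨_, rfl⟩

theorem wedge_cons_append (e : κ → M) (i : κ) (l l' : List κ) :
    (wedge e (i :: (l ++ l')) : ExteriorAlgebra R M) =
      (-1 : R) ^ l.length • wedge e (l ++ i :: l') := by
  induction l with
  | nil => simp only [List.nil_append, List.length_nil, pow_zero, one_smul]
  | cons j l ih =>
    calc wedge e (i :: (j :: l ++ l'))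
      _ = ι R (e i) * ι R (e j) * wedge e (l ++ l') := by
        rw [mul_assoc, ι_mul_wedge, ι_mul_wedge, List.cons_append]
      _ = -(ι R (e j) * wedge e (i :: (l ++ l'))) := by
        rw [eq_neg_of_add_eq_zero_left (ι_add_mul_swap (e i) (e j)), neg_mul, mul_assoc,
          ι_mul_wedge]
      _ = (-1 : R) ^ (j :: l).length • wedge e (j :: l ++ i :: l') := by
        rw [ih, mul_smul_comm, ι_mul_wedge, List.length_cons, pow_succ', neg_one_mul, neg_smul,
          List.cons_append]

theorem wedge_finRange_ne_zero [Nontrivial R] {n : ℕ} (b : Basis (Fin n) R M) :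
    wedge b (List.finRange n) ≠ (0 : ExteriorAlgebra R M) := by
  rw [wedge, ← List.ofFn_eq_map, ← ιMulti_apply]
  exact ιMulti_basis_ne_zero b

theorem exteriorDerivation_wedge_nil (e : κ → M) (X : End R M) :
    exteriorDerivation X (wedge e []) = 0 :=
  exteriorDerivation_one X

theorem exteriorDerivation_wedge_cons (e : κ → M) (X : End R M) (i : κ) (l : List κ) :
    exteriorDerivation X (wedge e (i :: l)) =
      ι R (X (e i)) * wedge e l + ι R (e i) * exteriorDerivation X (wedge e l) := by
  rw [← ι_mul_wedge, exteriorDerivation_mul, exteriorDerivation_ι]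

end Wedge

section RegularNilpotent

open Module ExteriorAlgebra

variable {R M : Type*} [CommRing R] [AddCommGroup M] [Module R M]

/-- The bivector `e₁∧e₆ + e₂∧e₅ + e₃∧e₄`, with indices shifted to start at `0`. -/
def symplecticBivector (e : Fin 6 → M) : ExteriorAlgebra R M :=
  ι R (e 0) * ι R (e 5) + ι R (e 1) * ι R (e 4) + ι R (e 2) * ι R (e 3)

theorem symplecticBivector_mem_exteriorPower (e : Fin 6 → M) :
    symplecticBivector e ∈ ⋀[R]^2 M := by
  simpa [symplecticBivector, wedge] using
    add_mem (add_mem (wedge_mem_exteriorPower (R := R) e [0, 5]) (wedge_mem_exteriorPower e [1, 4]))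
      (wedge_mem_exteriorPower e [2, 3])

theorem symplecticBivector_mul_wedge (e : Fin 6 → M) (l : List (Fin 6)) :
    symplecticBivector e * wedge e l =
      (wedge e (0 :: 5 :: l) + wedge e (1 :: 4 :: l) + wedge e (2 :: 3 :: l) :
        ExteriorAlgebra R M) := by
  simp only [symplecticBivector, add_mul, mul_assoc, ι_mul_wedge]

/-- The successive images of the lowest-weight vector `e₄∧e₅∧e₆` of `⋀³` under the derivation
extending the regular nilpotent `X`. -/
def longChain (e : Fin 6 → M) : Fin 11 → ExteriorAlgebra R M :=
  ![wedge e [3, 4, 5],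
    wedge e [2, 4, 5],
    wedge e [1, 4, 5] - wedge e [2, 3, 5],
    wedge e [0, 4, 5] - (2 : R) • wedge e [1, 3, 5] + wedge e [2, 3, 4],
    -(3 : R) • wedge e [0, 3, 5] - (2 : R) • wedge e [1, 2, 5] + (3 : R) • wedge e [1, 3, 4],
    -(5 : R) • wedge e [0, 2, 5] + (6 : R) • wedge e [0, 3, 4] + (5 : R) • wedge e [1, 2, 4],
    -(5 : R) • wedge e [0, 1, 5] + (16 : R) • wedge e [0, 2, 4] - (5 : R) • wedge e [1, 2, 3],
    (21 : R) • (wedge e [0, 1, 4] - wedge e [0, 2, 3]),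
    -(42 : R) • wedge e [0, 1, 3],
    -(42 : R) • wedge e [0, 1, 2],
    0]

/-- The chain of length `4` completing `longChain` to a Jordan basis of the primitive 3-vectors.
Among the combinations of `wedge e [0, 4, 5]`, `wedge e [1, 3, 5]` and `wedge e [2, 3, 4]`, its
head is, up to a scalar, the only one that is primitive and killed by the fourth power of the
derivation. -/
def shortChain (e : Fin 6 → M) : Fin 5 → ExteriorAlgebra R M :=
  ![(8 : R) • wedge e [0, 4, 5] + (5 : R) • wedge e [1, 3, 5] + (8 : R) • wedge e [2, 3, 4],
    -(3 : R) • wedge e [0, 3, 5] + (5 : R) • wedge e [1, 2, 5] + (3 : R) • wedge e [1, 3, 4],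
    (2 : R) • wedge e [0, 2, 5] + (6 : R) • wedge e [0, 3, 4] - (2 : R) • wedge e [1, 2, 4],
    (2 : R) • (wedge e [0, 1, 5] + wedge e [0, 2, 4] + wedge e [1, 2, 3]),
    0]

/-- The monomial 5-vectors, up to sign the successive images of `e₂∧⋯∧e₆` under the derivation
extending the regular nilpotent `X`. -/
def pentavectorChain (e : Fin 6 → M) : Fin 7 → ExteriorAlgebra R M :=
  ![wedge e [1, 2, 3, 4, 5], wedge e [0, 2, 3, 4, 5], wedge e [0, 1, 3, 4, 5],
    wedge e [0, 1, 2, 4, 5], -wedge e [0, 1, 2, 3, 5], wedge e [0, 1, 2, 3, 4], 0]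

theorem symplecticBivector_mul_longChain_zero (e : Fin 6 → M) :
    symplecticBivector e * longChain e 0 = (0 : ExteriorAlgebra R M) := by
  simp [longChain, symplecticBivector_mul_wedge, wedge_eq_zero_of_not_nodup]

theorem symplecticBivector_mul_shortChain_zero (e : Fin 6 → M) :
    symplecticBivector e * shortChain e 0 = (0 : ExteriorAlgebra R M) := by
  have h₂₃ : wedge e [2, 3, 0, 4, 5] = (wedge e [0, 2, 3, 4, 5] : ExteriorAlgebra R M) := by
    simpa using (wedge_cons_append (R := R) e 0 [2, 3] [4, 5]).symm
  have h₀₅ : wedge e [0, 5, 2, 3, 4] = (-wedge e [0, 2, 3, 4, 5] : ExteriorAlgebra R M) := by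
    simpa [pow_succ, ι_mul_wedge] using
      congrArg (ι R (e 0) * ·) (wedge_cons_append (R := R) e 5 [2, 3, 4] [])
  simp [shortChain, mul_add, symplecticBivector_mul_wedge, wedge_eq_zero_of_not_nodup, h₂₃, h₀₅]

theorem symplecticBivector_mul_wedge_two_three_five (e : Fin 6 → M) :
    symplecticBivector e * wedge e [2, 3, 5] = (pentavectorChain e 0 : ExteriorAlgebra R M) := by
  have h₁₄ : wedge e [1, 4, 2, 3, 5] = (wedge e [1, 2, 3, 4, 5] : ExteriorAlgebra R M) := by
    simpa [ι_mul_wedge] using congrArg (ι R (e 1) * ·) (wedge_cons_append (R := R) e 4 [2, 3] [5])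
  simp [pentavectorChain, symplecticBivector_mul_wedge, wedge_eq_zero_of_not_nodup, h₁₄]

variable {e : Fin 6 → M} {X : End R M} (hX : ∀ i, X (e i) = ![0, e 0, e 1, e 2, -e 3, -e 4] i)
include hX

theorem exteriorDerivation_symplecticBivector :
    exteriorDerivation X (symplecticBivector e) = 0 := by
  simp [symplecticBivector, exteriorDerivation_mul, exteriorDerivation_ι, hX]

theorem exteriorDerivation_pow_longChain_zero (i : Fin 11) :
    (exteriorDerivation X ^ (i : ℕ)) (longChain e 0) = longChain e i := by
  refine pow_apply_of_forall_apply_castSucc (fun i => ?_) i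
  fin_cases i <;>
    simp [longChain, exteriorDerivation_wedge_cons, exteriorDerivation_wedge_nil, hX, ι_mul_wedge,
      wedge_eq_zero_of_not_nodup, mul_add] <;>
    module

theorem exteriorDerivation_pow_shortChain_zero (i : Fin 5) :
    (exteriorDerivation X ^ (i : ℕ)) (shortChain e 0) = shortChain e i := by
  refine pow_apply_of_forall_apply_castSucc (fun i => ?_) i
  fin_cases i <;>
    simp [shortChain, exteriorDerivation_wedge_cons, exteriorDerivation_wedge_nil, hX,
      ι_mul_wedge, wedge_eq_zero_of_not_nodup, mul_add] <;>
    module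

theorem exteriorDerivation_pow_pentavectorChain_zero (i : Fin 7) :
    (exteriorDerivation X ^ (i : ℕ)) (pentavectorChain e 0) = pentavectorChain e i := by
  refine pow_apply_of_forall_apply_castSucc (fun i => ?_) i
  fin_cases i <;>
    simp [pentavectorChain, exteriorDerivation_wedge_cons, exteriorDerivation_wedge_nil, hX,
      ι_mul_wedge, wedge_eq_zero_of_not_nodup, mul_add]

end RegularNilpotent

section JordanType

open Module ExteriorAlgebra

section CommRing

variable {R M : Type*} [CommRing R] [AddCommGroup M] [Module R M]

variable (R) in
/-- The 3-vectors `α` with `w ∧ α = 0`, where `w` is the symplectic bivector of the family `e`: the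
fundamental `Sp₆`-module `∧^⟨3⟩` when `e` is a basis. -/
def primitiveTrivectors (e : Fin 6 → M) : Submodule R (⋀[R]^3 M) :=
  LinearMap.ker (LinearMap.mulLeft R (symplecticBivector e) ∘ₗ (⋀[R]^3 M).subtype)

theorem mem_primitiveTrivectors {e : Fin 6 → M} {α : ⋀[R]^3 M} :
    α ∈ primitiveTrivectors R e ↔ symplecticBivector e * (α : ExteriorAlgebra R M) = 0 :=
  Iff.rfl

theorem apply_mem_primitiveTrivectors {e : Fin 6 → M} {X : End R M}
    (hX : ∀ i, X (e i) = ![0, e 0, e 1, e 2, -e 3, -e 4] i) {D : End R (⋀[R]^3 M)}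
    (hD : ∀ α, (D α : ExteriorAlgebra R M) = exteriorDerivation X α) {α : ⋀[R]^3 M}
    (hα : α ∈ primitiveTrivectors R e) : D α ∈ primitiveTrivectors R e := by
  rw [mem_primitiveTrivectors] at hα ⊢
  rw [hD, ← exteriorDerivation_mul_of_eq_zero (exteriorDerivation_symplecticBivector hX), hα,
    map_zero]

end CommRing

variable {K V : Type*} [Field K] [AddCommGroup V] [Module K V] (b : Basis (Fin 6) K V)

theorem linearIndependent_longChain_shortChain (h42 : (42 : K) ≠ 0) :
    LinearIndependent K (![longChain b 9, shortChain b 3] : Fin 2 → ExteriorAlgebra K V) := by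
  have htop : wedge b [0, 1, 2, 3, 4, 5] ≠ (0 : ExteriorAlgebra K V) := wedge_finRange_ne_zero b
  have h2 : (2 : K) ≠ 0 := fun h => h42 (by linear_combination 21 * h)
  refine LinearIndependent.pair_iff.2 fun s t hst => ⟨?_, ?_⟩
  · simpa [longChain, shortChain, add_mul, wedge_mul_wedge, wedge_eq_zero_of_not_nodup, htop,
      h42] using congrArg (· * wedge b [3, 4, 5]) hst
  · have hmul : wedge b [0] * (s • longChain b 9 + t • shortChain b 3) * wedge b [4, 5] =
        (0 : ExteriorAlgebra K V) := by rw [hst, mul_zero, zero_mul]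
    simpa [longChain, shortChain, mul_add, add_mul, wedge_mul_wedge,
      wedge_eq_zero_of_not_nodup, htop, h2] using hmul

theorem pentavectorChain_five_ne_zero :
    pentavectorChain b 5 ≠ (0 : ExteriorAlgebra K V) := fun h =>
  wedge_finRange_ne_zero (R := K) b <| by
    simpa [List.finRange_succ, pentavectorChain, wedge_mul_wedge] using congrArg (· * wedge b [5]) h

theorem finrank_range_symplecticBivector_mul :
    finrank K (LinearMap.range
      (LinearMap.mulLeft K (symplecticBivector b) ∘ₗ (⋀[K]^3 V).subtype)) = 6 := by
  have : Module.Finite K V := .of_basis b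
  set L := LinearMap.mulLeft K (symplecticBivector b) ∘ₗ (⋀[K]^3 V).subtype
  apply le_antisymm
  · have hle : LinearMap.range L ≤ ⋀[K]^5 V := by
      rintro _ ⟨α, rfl⟩
      exact SetLike.mul_mem_graded (A := fun n => ⋀[K]^n V)
        (symplecticBivector_mem_exteriorPower b) α.2
    simpa [exteriorPower.finrank_eq, finrank_eq_card_basis b] using Submodule.finrank_mono hle
  · let X : End K V := b.constr K ![0, b 0, b 1, b 2, -b 3, -b 4]
    have hX : ∀ i, X (b i) = ![0, b 0, b 1, b 2, -b 3, -b 4] i := b.constr_basis K _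
    have hchain := exteriorDerivation_pow_pentavectorChain_zero hX
    have hindep : LinearIndependent K (jordanChains (exteriorDerivation X)
        (fun _ : Unit => pentavectorChain b 0) fun _ => 6) :=
      linearIndependent_jordanChains (fun _ => hchain 6) <|
        (linearIndependent_unique_iff (R := K)).2 <|
          (hchain 5).trans_ne (pentavectorChain_five_ne_zero b)
    have hinv : ∀ a ∈ LinearMap.range L, exteriorDerivation X a ∈ LinearMap.range L := by
      rintro _ ⟨α, rfl⟩
      exact ⟨⟨exteriorDerivation X α, exteriorDerivation_mem_exteriorPower X α.2⟩,
        (exteriorDerivation_mul_of_eq_zero (exteriorDerivation_symplecticBivector hX) _).symm⟩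
    have hhead : pentavectorChain b 0 ∈ LinearMap.range L :=
      ⟨⟨wedge b [2, 3, 5], wedge_mem_exteriorPower b [2, 3, 5]⟩,
        symplecticBivector_mul_wedge_two_three_five b⟩
    simpa using card_le_finrank_of_forall_mem hindep fun a =>
      End.pow_apply_mem_of_forall_mem a.2 hinv _ hhead

theorem finrank_primitiveTrivectors : finrank K (primitiveTrivectors K b) = 14 := by
  have : Module.Finite K V := .of_basis b
  have hrank := LinearMap.finrank_range_add_finrank_ker
    (LinearMap.mulLeft K (symplecticBivector b) ∘ₗ (⋀[K]^3 V).subtype)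
  rw [finrank_range_symplecticBivector_mul, exteriorPower.finrank_eq, finrank_eq_card_basis b,
    Fintype.card_fin, show Nat.choose 6 3 = 20 from rfl] at hrank
  exact Nat.add_left_cancel hrank

theorem longChain_zero_mem_exteriorPower : longChain b 0 ∈ ⋀[K]^3 V :=
  wedge_mem_exteriorPower b [3, 4, 5]

theorem shortChain_zero_mem_exteriorPower : shortChain b 0 ∈ ⋀[K]^3 V :=
  add_mem (add_mem (Submodule.smul_mem _ _ (wedge_mem_exteriorPower b [0, 4, 5]))
    (Submodule.smul_mem _ _ (wedge_mem_exteriorPower b [1, 3, 5])))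
    (Submodule.smul_mem _ _ (wedge_mem_exteriorPower b [2, 3, 4]))

variable {b} in
theorem exists_jordanChains_primitiveTrivectors (h42 : (42 : K) ≠ 0) {X : End K V}
    (hX : ∀ i, X (b i) = ![0, b 0, b 1, b 2, -b 3, -b 4] i)
    {Z : End K (primitiveTrivectors K b)}
    (hZ : ∀ α, ((Z α : ⋀[K]^3 V) : ExteriorAlgebra K V) =
      exteriorDerivation X (α : ⋀[K]^3 V)) :
    ∃ x : Fin 2 → primitiveTrivectors K b, (∀ j, (Z ^ ![10, 4] j) (x j) = 0) ∧
      LinearIndependent K (jordanChains Z x ![10, 4]) := by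
  let φ : primitiveTrivectors K b →ₗ[K] ExteriorAlgebra K V :=
    (⋀[K]^3 V).subtype ∘ₗ (primitiveTrivectors K b).subtype
  have hφ : Function.Injective φ := Subtype.val_injective.comp Subtype.val_injective
  have hpow (k : ℕ) (α : primitiveTrivectors K b) :
      φ ((Z ^ k) α) = (exteriorDerivation X ^ k) (φ α) :=
    (LinearMap.congr_fun (End.commute_pow_left_of_commute
      (LinearMap.ext fun α => (hZ α).symm : exteriorDerivation X ∘ₗ φ = φ ∘ₗ Z) k) α).symm
  let x : Fin 2 → primitiveTrivectors K b :=
    ![⟨⟨longChain b 0, longChain_zero_mem_exteriorPower b⟩,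
        mem_primitiveTrivectors.2 (symplecticBivector_mul_longChain_zero b)⟩,
      ⟨⟨shortChain b 0, shortChain_zero_mem_exteriorPower b⟩,
        mem_primitiveTrivectors.2 (symplecticBivector_mul_shortChain_zero b)⟩]
  have hlong := exteriorDerivation_pow_longChain_zero hX
  have hshort := exteriorDerivation_pow_shortChain_zero hX
  have hzero : ∀ j, (Z ^ ![10, 4] j) (x j) = 0 := by
    refine Fin.forall_fin_two.2 ⟨hφ ?_, hφ ?_⟩ <;> rw [hpow, map_zero]
    exacts [hlong 10, hshort 4]
  refine ⟨x, hzero, linearIndependent_jordanChains hzero (.of_comp φ ?_)⟩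
  have hlast : φ ∘ (fun j => (Z ^ (![10, 4] j - 1)) (x j)) =
      (![longChain b 9, shortChain b 3] : Fin 2 → ExteriorAlgebra K V) := by
    ext j
    rw [Function.comp_apply, hpow]
    fin_cases j
    exacts [hlong 9, hshort 3]
  exact hlast ▸ linearIndependent_longChain_shortChain b h42

theorem genus9_jordan_type_regular_orbit_general (h42 : (42 : K) ≠ 0) {X : End K V}
    (hX : ∀ i, X (b i) = ![0, b 0, b 1, b 2, -b 3, -b 4] i) {D : End K (⋀[K]^3 V)}
    (hD : ∀ v : Fin 3 → V, (D (exteriorPower.ιMulti K 3 v) : ExteriorAlgebra K V) =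
      ∑ i, ιMulti K 3 (Function.update v i (X (v i)))) :
    finrank K (primitiveTrivectors K b) = 14 ∧
      ∃ hinv : ∀ α ∈ primitiveTrivectors K b, D α ∈ primitiveTrivectors K b,
        IsNilpotent (D.restrict hinv) ∧
          ∀ p : ℕ, finrank K (LinearMap.ker ((D.restrict hinv) ^ p)) = min p 10 + min p 4 := by
  have : Module.Finite K V := .of_basis b
  have hDδ := coe_eq_exteriorDerivation X hD
  have hinv : ∀ α ∈ primitiveTrivectors K b, D α ∈ primitiveTrivectors K b :=
    fun _ => apply_mem_primitiveTrivectors hX hDδ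
  obtain ⟨x, hzero, hindep⟩ :=
    exists_jordanChains_primitiveTrivectors h42 hX (Z := D.restrict hinv) fun α => hDδ α
  have hdim := finrank_primitiveTrivectors b
  refine ⟨hdim, hinv, isNilpotent_of_jordanChains hzero hindep ?_, fun p => ?_⟩
  · simpa using hdim
  · simpa using finrank_ker_pow_eq_sum_min hzero hindep (by simpa using hdim) p

end JordanType

open ExteriorAlgebra in
/-- Genus 9, regular nilpotent orbit `O_{[6]}`: the representative `X_{[6]}` of `sp₆` acts on
the 14-dimensional module `∧^⟨3⟩ℂ⁶ = ker(w ∧ ·) ⊆ ⋀³ℂ⁶` as a nilpotent operator of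
Jordan type `(10, 4)`. -/
theorem genus9_jordan_type_regular_orbit
    (e : Fin 6 → (Fin 6 → ℂ)) (he : e = fun i => Pi.single i 1)
    (w : ExteriorAlgebra ℂ (Fin 6 → ℂ))
    (hw : w = ι ℂ (e 0) * ι ℂ (e 5) + ι ℂ (e 1) * ι ℂ (e 4) + ι ℂ (e 2) * ι ℂ (e 3))
    (W : Submodule ℂ (⋀[ℂ]^3 (Fin 6 → ℂ)))
    (hWdef : W = LinearMap.ker
      ((LinearMap.mulLeft ℂ w).comp (Submodule.subtype (⋀[ℂ]^3 (Fin 6 → ℂ)))))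
    (X : Module.End ℂ (Fin 6 → ℂ))
    (hX0 : X (e 0) = 0) (hX1 : X (e 1) = e 0) (hX2 : X (e 2) = e 1)
    (hX3 : X (e 3) = e 2) (hX4 : X (e 4) = -e 3) (hX5 : X (e 5) = -e 4)
    (D : Module.End ℂ (⋀[ℂ]^3 (Fin 6 → ℂ)))
    (hD : ∀ v : Fin 3 → (Fin 6 → ℂ),
      (D ⟨ιMulti ℂ 3 v, ιMulti_range ℂ 3 ⟨v, rfl⟩⟩ : ⋀[ℂ]^3 (Fin 6 → ℂ)) =
        ∑ i : Fin 3, ιMulti ℂ 3 (Function.update v i (X (v i)))) :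
    Module.finrank ℂ W = 14 ∧
      ∃ hinv : ∀ x ∈ W, D x ∈ W,
        IsNilpotent (D.restrict hinv) ∧
          ∀ p : ℕ, Module.finrank ℂ (LinearMap.ker ((D.restrict hinv) ^ p)) =
            min p 10 + min p 4 := by
  obtain ⟨b, rfl⟩ : ∃ b : Module.Basis (Fin 6) ℂ (Fin 6 → ℂ), ⇑b = e :=
    ⟨Pi.basisFun ℂ (Fin 6), he ▸ funext (Pi.basisFun_apply ℂ (Fin 6))⟩
  subst hw hWdef
  exact genus9_jordan_type_regular_orbit_general b (by norm_num)
    (fun i => by fin_cases i <;> assumption) hD
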